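/- The following are equivalent: (1) ω₁ < 𝔟; (2) every K-analytic Hausdorff topological space in which every compact subset is metrizable is analytic. -/

import Mathlib

open Cardinal Set Topology

universe u

def FunctionallyHausdorff (X : Type u) [TopologicalSpace X] : Prop :=
  ∀ x y : X, x ≠ y → ∃ f : X → unitInterval, Continuous f ∧ f x = 0 ∧ f y = 1

def IsCechComplete (X : Type u) [TopologicalSpace X] : Prop :=
  ∃ (K : Type u) (_ : TopologicalSpace K) (e : X → K),
    CompactSpace K ∧ T2Space K ∧ IsEmbedding e ∧ DenseRange e ∧ IsGδ (Set.range e)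

noncomputable def lindelofNumber (X : Type u) [TopologicalSpace X] : Cardinal.{u} :=
  sInf {κ : Cardinal.{u} | ℵ₀ ≤ κ ∧ ∀ U : Set (Set X), (∀ u ∈ U, IsOpen u) → ⋃₀ U = Set.univ →
    ∃ V ⊆ U, #↥V ≤ κ ∧ ⋃₀ V = Set.univ}

noncomputable def pseudocharacter (X : Type u) [TopologicalSpace X] : Cardinal.{u} :=
  sInf {κ : Cardinal.{u} | ℵ₀ ≤ κ ∧ ∀ x : X, ∃ 𝒰 : Set (Set X),
    #↥𝒰 ≤ κ ∧ (∀ U ∈ 𝒰, IsOpen U ∧ x ∈ U) ∧ ⋂₀ 𝒰 = ⋂₀ {U : Set X | IsOpen U ∧ x ∈ U}}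

def IsScatteredSet {X : Type u} [TopologicalSpace X] (S : Set X) : Prop :=
  ∀ T ⊆ S, T.Nonempty → ∃ x ∈ T, ∃ U : Set X, IsOpen U ∧ U ∩ T = {x}

def IsKAnalytic (X : Type u) [TopologicalSpace X] : Prop :=
  ∃ (P : Type u) (_ : TopologicalSpace P) (f : P → X),
    LindelofSpace P ∧ IsCechComplete P ∧ Continuous f ∧ Function.Surjective f

def IsAnalyticSpace (X : Type u) [TopologicalSpace X] : Prop :=
  ∃ (P : Type u) (_ : TopologicalSpace P), PolishSpace P ∧
    ∃ f : P → X, Continuous f ∧ Function.Surjective f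

noncomputable def boundingNumber : Cardinal.{0} :=
  sInf {κ : Cardinal.{0} | ∃ B : Set (ℕ → ℕ), #↥B = κ ∧
    ∀ y : ℕ → ℕ, ∃ x ∈ B, {n : ℕ | ¬ x n ≤ y n}.Infinite}

/-- There is a well-ordered set of cardinality `ℵ₁` with countable initial segments. -/
theorem exists_wellOrder_aleph_one :
    ∃ (Ω : Type) (_ : LinearOrder Ω) (_ : WellFoundedLT Ω), #Ω = Cardinal.aleph 1 ∧
      ∀ a : Ω, (Iio a).Countable := by
  refine ⟨(Cardinal.aleph 1).ord.ToType, inferInstance, inferInstance, mk_ord_toType _, ?_⟩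
  intro a
  have h := Cardinal.mk_Iio_lt a (by simp)
  rw [mk_ord_toType] at h
  rwa [← Cardinal.le_aleph0_iff_set_countable, ← Order.lt_succ_iff, Cardinal.succ_aleph0]

theorem exists_forall_eq_image_Iio {Ω α : Type*} [LinearOrder Ω] [WellFoundedLT Ω]
    (F : Ω → Set α → α) : ∃ x : Ω → α, ∀ a, x a = F a (x '' Iio a) := by
  let x : Ω → α := (wellFounded_lt (α := Ω)).fix
    fun a r => F a {y | ∃ b, ∃ h : b < a, r b h = y}
  refine ⟨x, fun a => ?_⟩
  have h := (wellFounded_lt (α := Ω)).fix_eq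
    (fun a (r : ∀ b, b < a → α) => F a {y | ∃ b, ∃ h : b < a, r b h = y}) a
  refine h.trans (congrArg (F a) ?_)
  ext y
  simp [x]

theorem exists_mem_forall_lt_of_not_countable {Ω : Type*} [LinearOrder Ω]
    (hΩ : ∀ a : Ω, (Iio a).Countable) {A C : Set Ω} (hA : ¬ A.Countable) (hC : C.Countable) :
    ∃ a ∈ A, ∀ c ∈ C, c < a := by
  by_contra! h
  refine hA ((hC.biUnion fun c _ => (hΩ c).insert c).mono fun a ha => ?_)
  obtain ⟨c, hc, hac⟩ := h a ha
  exact mem_biUnion hc (hac.eq_or_lt.imp id id)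

/-- A countable family of sequences has an upper bound for eventual domination. -/
theorem Set.Countable.exists_eventually_le {S : Set (ℕ → ℕ)} (hS : S.Countable) :
    ∃ y : ℕ → ℕ, ∀ x ∈ S, ∀ᶠ n in Filter.atTop, x n ≤ y n := by
  rcases S.eq_empty_or_nonempty with rfl | hne
  · exact ⟨0, by simp⟩
  obtain ⟨g, rfl⟩ := hS.exists_eq_range hne
  refine ⟨fun n => ∑ i ∈ Finset.range (n + 1), g i n, ?_⟩
  rintro _ ⟨k, rfl⟩
  filter_upwards [Filter.eventually_ge_atTop k] with n hn
  exact Finset.single_le_sum (f := fun i => g i n) (fun _ _ => Nat.zero_le _)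
    (Finset.mem_range.2 (by omega))

theorem exists_eventually_le_of_lt_boundingNumber {I : Type} (hI : #I < boundingNumber)
    (x : I → ℕ → ℕ) : ∃ y : ℕ → ℕ, ∀ i, ∀ᶠ n in Filter.atTop, x i n ≤ y n := by
  by_contra! h
  refine (hI.trans_le' mk_range_le).not_ge (csInf_le' (a := #(range x)) ⟨range x, rfl, fun y => ?_⟩)
  obtain ⟨i, hi⟩ := h y
  refine ⟨x i, mem_range_self i, ?_⟩
  simpa [← Nat.frequently_atTop_iff_infinite] using hi

theorem exists_unbounded_of_boundingNumber :
    ∃ B : Set (ℕ → ℕ), #B = boundingNumber ∧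
      ∀ y : ℕ → ℕ, ∃ x ∈ B, {n : ℕ | ¬ x n ≤ y n}.Infinite := by
  refine csInf_mem (s := {κ : Cardinal.{0} | ∃ B : Set (ℕ → ℕ), #↥B = κ ∧
    ∀ y : ℕ → ℕ, ∃ x ∈ B, {n : ℕ | ¬ x n ≤ y n}.Infinite}) ⟨_, univ, rfl, fun y => ?_⟩
  refine ⟨y + 1, mem_univ _, ?_⟩
  simpa using infinite_univ

theorem Nat.exists_forall_le_add_of_eventually_le {x y : ℕ → ℕ}
    (h : ∀ᶠ n in Filter.atTop, x n ≤ y n) : ∃ m, ∀ n, x n ≤ y n + m := by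
  obtain ⟨N, hN⟩ := Filter.eventually_atTop.1 h
  refine ⟨∑ i ∈ Finset.range N, x i, fun n => ?_⟩
  rcases le_or_gt N n with hn | hn
  · exact (hN n hn).trans (Nat.le_add_right _ _)
  · exact (Finset.single_le_sum (f := x) (fun _ _ => Nat.zero_le _)
      (Finset.mem_range.2 hn)).trans (Nat.le_add_left _ _)

/-- If `𝔟 ≤ ℵ₁`, there are uncountably many sequences such that every pointwise bound
bounds only countably many of them. -/
theorem exists_uncountable_family_of_boundingNumber_le
    (h : boundingNumber ≤ Cardinal.aleph 1) :
    ∃ (Ω : Type) (x : Ω → ℕ → ℕ), Uncountable Ω ∧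
      ∀ y : ℕ → ℕ, {a | ∀ n, x a n ≤ y n}.Countable := by
  obtain ⟨Ω, _, _, hcard, hΩ⟩ := exists_wellOrder_aleph_one
  obtain ⟨B, hB, hunb⟩ := exists_unbounded_of_boundingNumber
  have hne : Nonempty B := let ⟨x, hx, _⟩ := hunb 0; ⟨⟨x, hx⟩⟩
  obtain ⟨j⟩ : Nonempty (B ↪ Ω) := by
    rw [← Cardinal.le_def, hB, hcard]
    exact h
  have key : ∀ (a : Ω) (S : Set (ℕ → ℕ)), ∃ y : ℕ → ℕ, S.Countable →
      ∀ x ∈ insert ((Function.invFun j a : B) : ℕ → ℕ) S, ∀ᶠ n in Filter.atTop, x n ≤ y n := by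
    intro a S
    by_cases hS : S.Countable
    · obtain ⟨y, hy⟩ := (hS.insert ((Function.invFun j a : B) : ℕ → ℕ)).exists_eventually_le
      exact ⟨y, fun _ => hy⟩
    · exact ⟨0, fun h => (hS h).elim⟩
  choose F hF using key
  obtain ⟨x, hx⟩ := exists_forall_eq_image_Iio F
  have hdom : ∀ a, ∀ z ∈ insert ((Function.invFun j a : B) : ℕ → ℕ) (x '' Iio a),
      ∀ᶠ n in Filter.atTop, z n ≤ x a n := by
    intro a
    rw [hx a]
    exact hF a _ ((hΩ a).image x)
  refine ⟨Ω, x, ?_, fun y => ?_⟩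
  · rw [← Cardinal.aleph0_lt_mk_iff, hcard]
    exact Cardinal.aleph0_lt_aleph_one
  · by_contra hy
    obtain ⟨b, hb, hinf⟩ := hunb y
    obtain ⟨a, ha, hlt⟩ :=
      exists_mem_forall_lt_of_not_countable hΩ hy (countable_singleton (j ⟨b, hb⟩))
    have h1 := hdom (j ⟨b, hb⟩) b (by simp [Function.leftInverse_invFun j.injective _])
    have h2 := hdom a _ (Or.inr ⟨_, hlt _ rfl, rfl⟩)
    rw [← Nat.frequently_atTop_iff_infinite] at hinf
    refine hinf ?_
    filter_upwards [h1, h2] with n h1 h2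
    simpa using (h1.trans h2).trans (ha n)

/-- A Lindelöf Čech-complete space has a complete sequence of countable closed covers. -/
theorem IsCechComplete.exists_complete_closed_covers {P : Type u} [TopologicalSpace P]
    [LindelofSpace P] (h : IsCechComplete P) :
    ∃ V : ℕ → ℕ → Set P, (∀ n i, IsClosed (V n i)) ∧ (∀ n p, ∃ i, p ∈ V n i) ∧
      ∀ F : Ultrafilter P, (∀ n, ∃ i, V n i ∈ F) → ∃ p, (F : Filter P) ≤ 𝓝 p := by
  rcases isEmpty_or_nonempty P with hP | hP
  · exact ⟨fun _ _ => ∅, by simp, by simp, fun F =>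
      (hP.false (F.nonempty_of_mem Filter.univ_mem).some).elim⟩
  obtain ⟨K, _, e, _, _, he, -, hG⟩ := h
  obtain ⟨U, hU, hrange⟩ := isGδ_iff_eq_iInter_nat.1 hG
  have hreg : ∀ n p, ∃ O : Set K, IsOpen O ∧ e p ∈ O ∧ closure O ⊆ U n := by
    intro n p
    have hp : e p ∈ U n := mem_iInter.1 (hrange ▸ mem_range_self p) n
    obtain ⟨t, ht, htc, htU⟩ := exists_mem_nhds_isClosed_subset ((hU n).mem_nhds hp)
    exact ⟨interior t, isOpen_interior, mem_interior_iff_mem_nhds.2 ht,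
      (closure_minimal interior_subset htc).trans htU⟩
  choose O hO hpO hOU using hreg
  have hcov : ∀ n, ∃ g : ℕ → P, ∀ p, ∃ i, e p ∈ O n (g i) := by
    intro n
    obtain ⟨t, ht, htU⟩ := LindelofSpace.elim_nhds_subcover (fun p => e ⁻¹' O n p)
      fun p => ((hO n p).preimage he.continuous).mem_nhds (hpO n p)
    have hne : t.Nonempty := by
      obtain ⟨p, hp, -⟩ := mem_iUnion₂.1 (htU ▸ mem_univ hP.some)
      exact ⟨p, hp⟩
    obtain ⟨g, rfl⟩ := ht.exists_eq_range hne
    refine ⟨g, fun p => ?_⟩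
    obtain ⟨_, ⟨i, rfl⟩, hi⟩ := mem_iUnion₂.1 (htU ▸ mem_univ p)
    exact ⟨i, hi⟩
  choose g hg using hcov
  refine ⟨fun n i => e ⁻¹' closure (O n (g n i)), fun n i => isClosed_closure.preimage he.continuous,
    fun n p => (hg n p).imp fun i hi => subset_closure hi, fun F hF => ?_⟩
  obtain ⟨k, hk⟩ : ∃ k, ((F.map e : Ultrafilter K) : Filter K) ≤ 𝓝 k :=
    ⟨_, (F.map e).le_nhds_lim⟩
  have hkr : k ∈ range e := by
    rw [hrange, mem_iInter]
    intro n
    obtain ⟨i, hi⟩ := hF n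
    exact hOU n _ (isClosed_iff_ultrafilter.1 isClosed_closure k (F.map e) hk hi)
  obtain ⟨p, rfl⟩ := hkr
  refine ⟨p, ?_⟩
  rw [he.nhds_eq_comap]
  exact Filter.map_le_iff_le_comap.1 hk

theorem isCompact_setOf_forall_exists_le {P : Type*} [TopologicalSpace P] {V : ℕ → ℕ → Set P}
    (hV : ∀ n i, IsClosed (V n i))
    (hF : ∀ F : Ultrafilter P, (∀ n, ∃ i, V n i ∈ F) → ∃ p, (F : Filter P) ≤ 𝓝 p) (y : ℕ → ℕ) :
    IsCompact {p | ∀ n, ∃ i ≤ y n, p ∈ V n i} := by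
  have heq : {p | ∀ n, ∃ i ≤ y n, p ∈ V n i} = ⋂ n, ⋃ i ∈ Iic (y n), V n i := by
    ext p; simp
  have hcl : IsClosed {p | ∀ n, ∃ i ≤ y n, p ∈ V n i} := by
    rw [heq]
    exact isClosed_iInter fun n => (finite_Iic (y n)).isClosed_biUnion fun i _ => hV n i
  rw [isCompact_iff_ultrafilter_le_nhds']
  intro F hyF
  obtain ⟨p, hp⟩ := hF F fun n => by
    have hn : (⋃ i ∈ Iic (y n), V n i) ∈ F := by
      refine Filter.mem_of_superset hyF ?_
      rw [heq]
      exact iInter_subset _ n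
    obtain ⟨i, -, hi⟩ := (Ultrafilter.finite_biUnion_mem_iff (finite_Iic (y n))).1 hn
    exact ⟨i, hi⟩
  exact ⟨p, isClosed_iff_ultrafilter.1 hcl p F hp hyF, hp⟩

/-- If `ℵ₁ < 𝔟`, families of at most `ℵ₁` points of a space with a complete sequence of
countable closed covers are contained in a countable union of compact sets. -/
theorem exists_isCompact_cover_of_lt_boundingNumber {P : Type*} [TopologicalSpace P]
    {V : ℕ → ℕ → Set P} (hV : ∀ n i, IsClosed (V n i)) (hcov : ∀ n p, ∃ i, p ∈ V n i)
    (hF : ∀ F : Ultrafilter P, (∀ n, ∃ i, V n i ∈ F) → ∃ p, (F : Filter P) ≤ 𝓝 p)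
    {I : Type} (hI : #I < boundingNumber) (g : I → P) :
    ∃ C : ℕ → Set P, (∀ m, IsCompact (C m)) ∧ ∀ i, ∃ m, g i ∈ C m := by
  choose s hs using hcov
  obtain ⟨y, hy⟩ := exists_eventually_le_of_lt_boundingNumber hI fun i n => s n (g i)
  refine ⟨fun m => {p | ∀ n, ∃ i ≤ y n + m, p ∈ V n i},
    fun m => isCompact_setOf_forall_exists_le hV hF fun n => y n + m, fun i => ?_⟩
  obtain ⟨m, hm⟩ := Nat.exists_forall_le_add_of_eventually_le (hy i)
  exact ⟨m, fun n => ⟨_, hm n, hs n _⟩⟩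

/-- If any `ℵ₁` points of a Hausdorff space are covered by countably many metrizable compact sets,
then countably many pairs of disjoint open sets separate its points. -/
theorem exists_countable_separating_pairs {X : Type*} [TopologicalSpace X] [T2Space X]
    (hcov : ∀ {I : Type} (_ : #I = Cardinal.aleph 1) (g : I → X), ∃ C : ℕ → Set X,
      (∀ m, IsCompact (C m)) ∧ ∀ i, ∃ m, g i ∈ C m)
    (hmet : ∀ K : Set X, IsCompact K → TopologicalSpace.MetrizableSpace K) :
    ∃ (S : Set (X × X)) (U W : X × X → Set X), S.Countable ∧
      (∀ s ∈ S, IsOpen (U s) ∧ IsOpen (W s) ∧ Disjoint (U s) (W s)) ∧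
      ∀ x y, x ≠ y → ∃ s ∈ S, x ∈ U s ∧ y ∈ W s := by
  have hsep : ∀ s : X × X, ∃ U W : Set X, s.1 ≠ s.2 →
      IsOpen U ∧ IsOpen W ∧ s.1 ∈ U ∧ s.2 ∈ W ∧ Disjoint U W := by
    intro s
    by_cases hs : s.1 = s.2
    · exact ⟨∅, ∅, fun h => (h hs).elim⟩
    · obtain ⟨U, W, h⟩ := t2_separation hs
      exact ⟨U, W, fun _ => h⟩
  choose U W hUW using hsep
  by_contra! hcon
  obtain ⟨Ω, _, _, hcard, hΩ⟩ := exists_wellOrder_aleph_one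
  have hnext : ∀ S : Set (X × X), ∃ z : X × X, S.Countable → (∀ s ∈ S, s.1 ≠ s.2) →
      z.1 ≠ z.2 ∧ ∀ s ∈ S, z.1 ∈ U s → z.2 ∉ W s := by
    intro S
    by_cases hS : S.Countable ∧ ∀ s ∈ S, s.1 ≠ s.2
    · obtain ⟨x, y, hxy, h⟩ := hcon S U W hS.1 fun s hs =>
        let h := hUW s (hS.2 s hs); ⟨h.1, h.2.1, h.2.2.2.2⟩
      exact ⟨(x, y), fun _ _ => ⟨hxy, h⟩⟩
    · obtain ⟨x, y, hxy, -⟩ := hcon ∅ U W countable_empty (by simp)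
      exact ⟨(x, y), fun h1 h2 => (hS ⟨h1, h2⟩).elim⟩
  choose F hF using hnext
  obtain ⟨z, hz⟩ := exists_forall_eq_image_Iio (Ω := Ω) fun _ => F
  have hne : ∀ a, (z a).1 ≠ (z a).2 := by
    intro a
    induction a using WellFoundedLT.induction with
    | ind a ih =>
      rw [hz a]
      exact (hF _ ((hΩ a).image z) (by rintro _ ⟨b, hb, rfl⟩; exact ih b hb)).1
  have hnot : ∀ a b, b < a → (z a).1 ∈ U (z b) → (z a).2 ∉ W (z b) := by
    intro a b hb
    rw [hz a]
    exact (hF _ ((hΩ a).image z) (by rintro _ ⟨b, -, rfl⟩; exact hne b)).2 _ ⟨b, hb, rfl⟩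
  obtain ⟨C, hC, hzC⟩ := hcov hcard fun a => (z a).1
  obtain ⟨C', hC', hzC'⟩ := hcov hcard fun a => (z a).2
  have hunc : ¬ (univ : Set Ω).Countable := by
    rw [countable_univ_iff, ← Cardinal.mk_le_aleph0_iff, hcard, not_le]
    exact Cardinal.aleph0_lt_aleph_one
  obtain ⟨m, m', hA⟩ : ∃ m m', ¬ {a | (z a).1 ∈ C m ∧ (z a).2 ∈ C' m'}.Countable := by
    by_contra! h
    refine hunc ((countable_iUnion fun m => countable_iUnion fun m' => h m m').mono fun a _ => ?_)
    obtain ⟨m, hm⟩ := hzC a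
    obtain ⟨m', hm'⟩ := hzC' a
    exact mem_iUnion₂.2 ⟨m, m', hm, hm'⟩
  set T := C m ∪ C' m'
  have hT : IsCompact T := (hC m).union (hC' m')
  have := isCompact_iff_compactSpace.1 hT
  have := hmet T hT
  let _ := TopologicalSpace.metrizableSpaceMetric T
  have : SecondCountableTopology T := inferInstance
  let A := {a | (z a).1 ∈ C m ∧ (z a).2 ∈ C' m'}
  let O : A → Set (T × T) := fun a => (((↑) : T → X) ⁻¹' U (z a)) ×ˢ (((↑) : T → X) ⁻¹' W (z a))
  have hO : ∀ a, IsOpen (O a) := fun a =>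
    ((hUW _ (hne a)).1.preimage continuous_subtype_val).prod
      ((hUW _ (hne a)).2.1.preimage continuous_subtype_val)
  obtain ⟨S, hS, hSO⟩ := TopologicalSpace.isOpen_iUnion_countable O hO
  obtain ⟨a, ha, hlt⟩ := exists_mem_forall_lt_of_not_countable hΩ hA (hS.image Subtype.val)
  have hmem : ((⟨(z a).1, Or.inl ha.1⟩, ⟨(z a).2, Or.inr ha.2⟩) : T × T) ∈ ⋃ i, O i :=
    mem_iUnion.2 ⟨⟨a, ha⟩, (hUW _ (hne a)).2.2.1, (hUW _ (hne a)).2.2.2.1⟩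
  rw [← hSO] at hmem
  obtain ⟨b, hb, hbO⟩ := mem_iUnion₂.1 hmem
  exact hnot a b (hlt _ ⟨b, hb, rfl⟩) hbO.1 hbO.2

/-- A continuous image of a space with a complete sequence of countable closed covers is analytic
as soon as countably many pairs of disjoint open sets separate its points. -/
theorem isAnalyticSpace_of_countable_separating_pairs {X P : Type u} [TopologicalSpace X]
    [TopologicalSpace P] {f : P → X} (hf : Continuous f) (hsurj : Function.Surjective f)
    {V : ℕ → ℕ → Set P} (hV : ∀ n i, IsClosed (V n i)) (hcov : ∀ n p, ∃ i, p ∈ V n i)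
    (hF : ∀ F : Ultrafilter P, (∀ n, ∃ i, V n i ∈ F) → ∃ p, (F : Filter P) ≤ 𝓝 p)
    {S : Type u} [Countable S] (W : S → Bool → Set X) (hW : ∀ s b, IsOpen (W s b))
    (hdisj : ∀ s, Disjoint (W s true) (W s false))
    (hsep : ∀ x y, x ≠ y → ∃ s, x ∈ W s true ∧ y ∈ W s false) :
    IsAnalyticSpace X := by
  let R : (ℕ → ℕ) × (S → Bool) → P → Prop := fun z p =>
    (∀ n, p ∈ V n (z.1 n)) ∧ ∀ s, f p ∉ W s (z.2 s)
  have huniq : ∀ z p q, R z p → R z q → f p = f q := by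
    intro z p q hp hq
    by_contra hne
    obtain ⟨s, h1, h2⟩ := hsep _ _ hne
    cases hb : z.2 s
    · exact hq.2 s (hb ▸ h2)
    · exact hp.2 s (hb ▸ h1)
  have hlim : ∀ {D : Type u} (G : Ultrafilter D) (ζ : D → (ℕ → ℕ) × (S → Bool)) (π : D → P)
      (z : (ℕ → ℕ) × (S → Bool)), (∀ d, R (ζ d) (π d)) → Filter.Tendsto ζ G (𝓝 z) →
      ∃ p, R z p ∧ Filter.Tendsto π G (𝓝 p) := by
    intro D G ζ π z hR hζ
    have h1 : ∀ n, ∀ᶠ d in (G : Filter D), (ζ d).1 n = z.1 n := fun n =>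
      (((continuous_apply n).comp continuous_fst).tendsto z).comp hζ
        |>.eventually ((isOpen_discrete {z.1 n}).mem_nhds rfl)
    have h2 : ∀ s, ∀ᶠ d in (G : Filter D), (ζ d).2 s = z.2 s := fun s =>
      (((continuous_apply s).comp continuous_snd).tendsto z).comp hζ
        |>.eventually ((isOpen_discrete {z.2 s}).mem_nhds rfl)
    have h1' : ∀ n, ∀ᶠ d in (G : Filter D), π d ∈ V n (z.1 n) := fun n => by
      filter_upwards [h1 n] with d hd
      exact hd ▸ (hR d).1 n
    have h2' : ∀ s, ∀ᶠ d in (G : Filter D), f (π d) ∈ (W s (z.2 s))ᶜ := fun s => by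
      filter_upwards [h2 s] with d hd
      exact hd ▸ (hR d).2 s
    obtain ⟨p, hp⟩ := hF (G.map π) fun n => ⟨_, h1' n⟩
    have hp' : Filter.Tendsto π G (𝓝 p) := hp
    exact ⟨p, ⟨fun n => (hV n _).mem_of_tendsto hp' (h1' n), fun s =>
      (hW s _).isClosed_compl.mem_of_tendsto ((hf.tendsto p).comp hp') (h2' s)⟩, hp'⟩
  let D : Set ((ℕ → ℕ) × (S → Bool)) := {z | ∃ p, R z p}
  choose π hπ using fun d : D => d.2
  have hD : IsClosed D := by
    rw [isClosed_iff_ultrafilter]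
    intro z G hG hDG
    let G' : Ultrafilter D := G.comap Subtype.val_injective (by simpa using hDG)
    obtain ⟨p, hp, -⟩ := hlim G' Subtype.val π z hπ (by
      refine Filter.Tendsto.mono_right ?_ hG
      exact Filter.tendsto_comap)
    exact ⟨p, hp⟩
  have : PolishSpace ((ℕ → ℕ) × (S → Bool)) := ⟨⟩
  have : PolishSpace D := hD.polishSpace
  refine ⟨D, inferInstance, inferInstance, fun d => f (π d), ?_, fun x => ?_⟩
  · rw [continuous_iff_ultrafilter]
    intro d G hG
    obtain ⟨p, hp, hlimp⟩ :=
      hlim G Subtype.val π d hπ ((continuous_subtype_val.tendsto d).mono_left hG)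
    rw [huniq d _ p (hπ d) hp]
    exact (hf.tendsto p).comp hlimp
  · obtain ⟨p, rfl⟩ := hsurj x
    choose σ hσ using hcov
    classical
    let z : (ℕ → ℕ) × (S → Bool) := (fun n => σ n p, fun s => decide (f p ∉ W s true))
    have hz : R z p := by
      refine ⟨fun n => hσ n p, fun s => ?_⟩
      by_cases hs : f p ∈ W s true
      · simpa [z, hs] using (hdisj s).notMem_of_mem_left hs
      · simp [z, hs]
    exact ⟨⟨z, p, hz⟩, huniq z _ _ (hπ ⟨z, p, hz⟩) hz⟩

theorem isAnalyticSpace_of_aleph_one_lt_boundingNumber (h : Cardinal.aleph 1 < boundingNumber)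
    (X : Type u) [TopologicalSpace X] [T2Space X] (hX : IsKAnalytic X)
    (hmet : ∀ K : Set X, IsCompact K → TopologicalSpace.MetrizableSpace K) :
    IsAnalyticSpace X := by
  obtain ⟨P, _, f, _, hP, hf, hsurj⟩ := hX
  obtain ⟨V, hV, hcov, hF⟩ := hP.exists_complete_closed_covers
  obtain ⟨S, U, W, hS, hSo, hsep⟩ := exists_countable_separating_pairs (X := X) (fun hI g => by
    choose r hr using hsurj
    obtain ⟨C, hC, hgC⟩ := exists_isCompact_cover_of_lt_boundingNumber hV hcov hF
      (hI.trans_lt h) fun i => r (g i)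
    exact ⟨fun m => f '' C m, fun m => (hC m).image hf, fun i =>
      (hgC i).imp fun m hm => ⟨_, hm, hr _⟩⟩) hmet
  have := hS.to_subtype
  refine isAnalyticSpace_of_countable_separating_pairs hf hsurj hV hcov hF (S := S)
    (fun s b => cond b (U s) (W s)) ?_ (fun s => (hSo s s.2).2.2) fun x y hxy => ?_
  · rintro s (_ | _)
    exacts [(hSo s s.2).2.1, (hSo s s.2).1]
  · obtain ⟨s, hs, h⟩ := hsep x y hxy
    exact ⟨⟨s, hs⟩, h⟩

/-- The product of a second countable space and a compact space is Lindelöf. -/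
theorem lindelofSpace_prod_of_secondCountable_of_compact (Y Z : Type*) [TopologicalSpace Y]
    [TopologicalSpace Z] [SecondCountableTopology Y] [CompactSpace Z] : LindelofSpace (Y × Z) := by
  refine ⟨isLindelof_of_countable_subcover fun {ι} U hU hcov => ?_⟩
  have hfin : ∀ y : Y, ∃ t : Finset ι, ∃ O ∈ 𝓝 y, O ×ˢ (univ : Set Z) ⊆ ⋃ i ∈ t, U i := by
    intro y
    obtain ⟨t, ht⟩ := (isCompact_singleton (x := y)).prod (isCompact_univ (X := Z))
      |>.elim_finite_subcover U hU ((subset_univ _).trans hcov)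
    obtain ⟨O, W, hO, -, hyO, hW, hOW⟩ := generalized_tube_lemma isCompact_singleton isCompact_univ
      (isOpen_biUnion fun i (_ : i ∈ t) => hU i) ht
    exact ⟨t, O, hO.mem_nhds (hyO rfl), (prod_mono Subset.rfl hW).trans hOW⟩
  choose t O hO hsub using hfin
  obtain ⟨c, hc, hcu⟩ := TopologicalSpace.countable_cover_nhds hO
  refine ⟨⋃ y ∈ c, ↑(t y), hc.biUnion fun y _ => (t y).countable_toSet, fun p _ => ?_⟩
  obtain ⟨y, hy, hpy⟩ := mem_iUnion₂.1 (hcu ▸ mem_univ p.1)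
  obtain ⟨i, hi, hpi⟩ := mem_iUnion₂.1 (hsub y ⟨hpy, mem_univ p.2⟩)
  exact mem_iUnion₂.2 ⟨i, mem_iUnion₂.2 ⟨y, hy, hi⟩, hpi⟩

theorem IsCechComplete.of_isEmbedding {P K : Type u} [TopologicalSpace P] [TopologicalSpace K]
    [CompactSpace K] [T2Space K] {e : P → K} (he : IsEmbedding e) (hG : IsGδ (range e)) :
    IsCechComplete P := by
  have hmem : ∀ p, e p ∈ closure (range e) := fun p => subset_closure (mem_range_self p)
  have hrange : range (codRestrict e _ hmem) = Subtype.val ⁻¹' range e := by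
    ext ⟨k, hk⟩
    simp
  refine ⟨closure (range e), inferInstance, codRestrict e _ hmem,
    isCompact_iff_compactSpace.1 isClosed_closure.isCompact, inferInstance,
    he.codRestrict _ hmem, ?_, ?_⟩
  · rintro ⟨k, hk⟩
    rw [hrange, closure_subtype]
    simpa [Subtype.image_preimage_coe, inter_eq_right.2 subset_closure] using hk
  · rw [hrange]
    exact hG.preimage continuous_subtype_val

/-- A set of indices is locally finite along a family of sequences if every sequence has a
neighbourhood containing only finitely many of the indexed terms. -/
def LocallyFiniteAlong {I : Type*} (x : I → ℕ → ℕ) (D : Set I) : Prop :=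
  ∀ s : ℕ → ℕ, ∃ O ∈ 𝓝 s, {i ∈ D | x i ∈ O}.Finite

theorem LocallyFiniteAlong.mono {I : Type*} {x : I → ℕ → ℕ} {D E : Set I}
    (hE : LocallyFiniteAlong x E) (h : D ⊆ E) : LocallyFiniteAlong x D := fun s =>
  (hE s).imp fun _ hO => ⟨hO.1, hO.2.subset fun _ hi => ⟨h hi.1, hi.2⟩⟩

theorem LocallyFiniteAlong.union {I : Type*} {x : I → ℕ → ℕ} {D E : Set I}
    (hD : LocallyFiniteAlong x D) (hE : LocallyFiniteAlong x E) :
    LocallyFiniteAlong x (D ∪ E) := by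
  intro s
  obtain ⟨O, hO, hf⟩ := hD s
  obtain ⟨O', hO', hf'⟩ := hE s
  refine ⟨O ∩ O', Filter.inter_mem hO hO', (hf.union hf').subset ?_⟩
  rintro i ⟨hi | hi, hiO, hiO'⟩
  exacts [Or.inl ⟨hi, hiO⟩, Or.inr ⟨hi, hiO'⟩]

theorem LocallyFiniteAlong.of_finite {I : Type*} (x : I → ℕ → ℕ) {D : Set I} (hD : D.Finite) :
    LocallyFiniteAlong x D :=
  fun _ => ⟨univ, Filter.univ_mem, hD.subset fun _ hi => hi.1⟩

/-- The discrete set `I` with a point at infinity, whose neighbourhoods have complements that are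
locally finite along `x`. -/
inductive AddLimit {I : Type*} (x : I → ℕ → ℕ)
  | lim : AddLimit x
  | pt (i : I) : AddLimit x

namespace AddLimit

variable {I : Type*} {x : I → ℕ → ℕ}

instance : TopologicalSpace (AddLimit x) where
  IsOpen U := lim ∈ U → LocallyFiniteAlong x {i | pt i ∉ U}
  isOpen_univ _ := LocallyFiniteAlong.of_finite x (by simp)
  isOpen_inter U W hU hW h := ((hU h.1).union (hW h.2)).mono fun i hi => by
    by_contra hcon
    rw [mem_union, not_or] at hcon
    exact hi ⟨not_not.1 hcon.1, not_not.1 hcon.2⟩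
  isOpen_sUnion 𝒰 h𝒰 := by
    rintro ⟨U, hU, hmem⟩
    exact (h𝒰 U hU hmem).mono fun i hi hiU => hi ⟨U, hU, hiU⟩

theorem isOpen_iff {U : Set (AddLimit x)} :
    IsOpen U ↔ (lim ∈ U → LocallyFiniteAlong x {i | pt i ∉ U}) := Iff.rfl

theorem pt_injective : Function.Injective (pt : I → AddLimit x) := fun _ _ h => by
  cases h
  rfl

theorem isOpen_of_lim_notMem {U : Set (AddLimit x)} (h : lim ∉ U) : IsOpen U :=
  isOpen_iff.2 fun h' => (h h').elim

theorem isClosed_image_pt {D : Set I} (hD : LocallyFiniteAlong x D) :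
    IsClosed ((pt : I → AddLimit x) '' D) := by
  rw [← isOpen_compl_iff, isOpen_iff]
  refine fun _ => hD.mono fun i hi => ?_
  obtain ⟨j, hj, hji⟩ := not_not.1 hi
  exact pt_injective hji ▸ hj

theorem isClopen_singleton_pt (i : I) : IsClopen ({pt i} : Set (AddLimit x)) :=
  ⟨by simpa using isClosed_image_pt (x := x) (LocallyFiniteAlong.of_finite x (finite_singleton i)),
    isOpen_of_lim_notMem (by simp)⟩

instance : T2Space (AddLimit x) := by
  have key : ∀ (i : I) (q : AddLimit x), pt i ≠ q →
      ∃ U V : Set (AddLimit x), IsOpen U ∧ IsOpen V ∧ pt i ∈ U ∧ q ∈ V ∧ Disjoint U V :=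
    fun i q h => ⟨{pt i}, {pt i}ᶜ, (isClopen_singleton_pt i).2,
      (isClopen_singleton_pt i).1.isOpen_compl, rfl, h.symm, disjoint_compl_right⟩
  refine ⟨fun p q hpq => ?_⟩
  obtain _ | i := p
  · obtain _ | j := q
    · exact (hpq rfl).elim
    · obtain ⟨U, V, hU, hV, h1, h2, h3⟩ := key j _ hpq.symm
      exact ⟨V, U, hV, hU, h2, h1, h3.symm⟩
  · exact key i q hpq

theorem finite_of_isCompact {K : Set (AddLimit x)} (hK : IsCompact K) {D : Set I}
    (hD : LocallyFiniteAlong x D) (hDK : ∀ i ∈ D, pt i ∈ K) : D.Finite := by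
  have hc : IsCompact ((pt : I → AddLimit x) '' D) :=
    hK.of_isClosed_subset (isClosed_image_pt hD) (image_subset_iff.2 hDK)
  have hd : DiscreteTopology ((pt : I → AddLimit x) '' D) := by
    refine discreteTopology_subtype_iff'.2 ?_
    rintro _ ⟨i, hi, rfl⟩
    exact ⟨{pt i}, (isClopen_singleton_pt i).2,
      inter_eq_left.2 (singleton_subset_iff.2 ⟨i, hi, rfl⟩)⟩
  exact (hc.finite ⟨hd⟩).of_finite_image pt_injective.injOn

theorem exists_bound_of_isCompact {K : Set (AddLimit x)} (hK : IsCompact K) :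
    ∃ y : ℕ → ℕ, ∀ i, pt i ∈ K → ∀ n, x i n ≤ y n := by
  have hfin : ∀ n, ((fun i => x i n) '' {i | pt i ∈ K}).Finite := by
    intro n
    by_contra hinf
    obtain ⟨D, hDK, hbij⟩ := exists_subset_bijOn {i | pt i ∈ K} (fun i => x i n)
    refine hinf (hbij.image_eq ▸ (finite_of_isCompact hK (D := D) (fun s => ?_) hDK).image _)
    refine ⟨(fun z : ℕ → ℕ => z n) ⁻¹' {s n},
      ((isOpen_discrete _).preimage (continuous_apply n)).mem_nhds rfl,
      Set.Subsingleton.finite fun i hi j hj => hbij.injOn hi.1 hj.1 (hi.2.trans hj.2.symm)⟩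
  choose y hy using fun n => (hfin n).bddAbove
  exact ⟨y, fun i hi n => hy n ⟨i, hi, rfl⟩⟩

theorem metrizableSpace_of_isCompact (hx : ∀ y : ℕ → ℕ, {i | ∀ n, x i n ≤ y n}.Countable)
    {K : Set (AddLimit x)} (hK : IsCompact K) : TopologicalSpace.MetrizableSpace K := by
  classical
  obtain ⟨y, hy⟩ := exists_bound_of_isCompact hK
  have hcount : Countable {i | pt i ∈ K} := ((hx y).mono hy).to_subtype
  have := isCompact_iff_compactSpace.1 hK
  let φ : K → {i | pt i ∈ K} → Bool := fun p i => decide (p.1 = pt i.1)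
  have hφ : Continuous φ := by
    refine continuous_pi fun i => ?_
    rw [continuous_bool_rng true]
    convert (isClopen_singleton_pt (x := x) i.1).preimage (continuous_subtype_val (p := (· ∈ K)))
    ext p
    simp [φ]
  have hinj : Function.Injective φ := by
    have key : ∀ (i : I) (h : pt i ∈ K) (q : K), φ ⟨pt i, h⟩ = φ q → pt i = q.1 := by
      intro i h q hq
      have := congrFun hq ⟨i, h⟩
      simpa [φ, eq_comm] using this
    rintro ⟨p, hp⟩ ⟨q, hq⟩ h
    apply Subtype.ext
    obtain _ | i := p
    · obtain _ | j := q
      · rfl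
      · exact (key j hq _ h.symm).symm
    · exact key i hp _ h
  exact (hφ.isClosedEmbedding hinj).isEmbedding.metrizableSpace

theorem not_isAnalyticSpace [Uncountable I] : ¬ IsAnalyticSpace (AddLimit x) := by
  rintro ⟨P, _, _, f, hf, hsurj⟩
  refine not_countable (α := I) ?_
  refine Pairwise.countable_of_isOpen_disjoint (s := fun i => f ⁻¹' {pt i}) (fun i j hij => ?_)
    (fun i => (isClopen_singleton_pt i).2.preimage hf) fun i => hsurj (pt i)
  exact Disjoint.preimage f (disjoint_singleton.2 (pt_injective.ne hij))

open OnePoint in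
theorem isKAnalytic {I : Type u} (x : I → ℕ → ℕ) : IsKAnalytic (AddLimit x) := by
  let _ : TopologicalSpace I := ⊥
  have : DiscreteTopology I := ⟨rfl⟩
  let R {M : Type} (j : (ℕ → ℕ) → M) : Set (M × OnePoint I) :=
    {z | ∀ i : I, z.2 = ↑i → z.1 = j (x i)}
  have hopen : ∀ i : I, IsOpen {(i : OnePoint I)} := fun i => by
    rw [← image_singleton, isOpen_image_coe]
    exact isOpen_discrete _
  have hR : ∀ {M : Type} [TopologicalSpace M] [T1Space M] (j : (ℕ → ℕ) → M), IsClosed (R j) := by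
    intro M _ _ j
    have heq : R j = ⋂ i : I,
        {z | z.2 ∈ ({(i : OnePoint I)}ᶜ : Set (OnePoint I))} ∪ {z | z.1 ∈ ({j (x i)} : Set M)} := by
      ext z
      simp [R, imp_iff_not_or]
    rw [heq]
    exact isClosed_iInter fun i => ((hopen i).isClosed_compl.preimage continuous_snd).union
      (isClosed_singleton.preimage continuous_fst)
  let P := R (id : (ℕ → ℕ) → ℕ → ℕ)
  have := lindelofSpace_prod_of_secondCountable_of_compact (ℕ → ℕ) (OnePoint I)
  have hP : IsClosed P := hR id
  let c : (ℕ → ℕ) → ℕ → OnePoint ℕ := Pi.map fun _ n => n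
  have hc : IsEmbedding c := IsEmbedding.piMap fun _ => isOpenEmbedding_coe.isEmbedding
  have hcR : ∀ z : P, Prod.map c id z.1 ∈ R c := fun z i hi => congrArg c (z.2 i hi)
  have : CompactSpace (R c) := isCompact_iff_compactSpace.1 (hR c).isCompact
  let f : P → AddLimit x := fun z => z.1.2.elim lim pt
  refine ⟨P, inferInstance, f, isLindelof_iff_lindelofSpace.1 hP.isLindelof, ?_, ?_, ?_⟩
  · refine IsCechComplete.of_isEmbedding (K := R c) (e := fun z => ⟨Prod.map c id z.1, hcR z⟩)
      (((hc.prodMap .id).comp .subtypeVal).codRestrict _ hcR) ?_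
    have heq : range (fun z : P => (⟨Prod.map c id z.1, hcR z⟩ : R c)) =
        ⋂ n : ℕ, (fun z : R c => z.1.1 n) ⁻¹' {∞}ᶜ := by
      refine Subset.antisymm ?_ fun z hz => ?_
      · rintro _ ⟨z, rfl⟩
        simp [c]
      · have hz' : ∀ n, ∃ k : ℕ, (k : OnePoint ℕ) = z.1.1 n := fun n =>
          ne_infty_iff_exists.1 (mem_iInter.1 hz n)
        choose s hs using hz'
        have hsz : c s = z.1.1 := funext hs
        refine ⟨⟨(s, z.1.2), fun i hi => hc.injective (hsz.trans (z.2 i hi))⟩, ?_⟩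
        exact Subtype.ext (Prod.ext hsz rfl)
    rw [heq]
    exact IsGδ.iInter_of_isOpen fun n => isClosed_singleton.isOpen_compl.preimage
      ((continuous_apply n).comp (continuous_fst.comp continuous_subtype_val))
  · rw [continuous_def]
    intro U hU
    rw [isOpen_iff_mem_nhds]
    rintro ⟨⟨s, q⟩, hz⟩ hzU
    have h1 : Continuous fun w : P => w.1.1 := continuous_fst.comp continuous_subtype_val
    have h2 : Continuous fun w : P => w.1.2 := continuous_snd.comp continuous_subtype_val
    induction q using OnePoint.rec with
    | infty =>
      obtain ⟨O, hO, hfin⟩ := isOpen_iff.1 hU hzU s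
      have hE := (hfin.image ((↑) : I → OnePoint I)).isClosed.isOpen_compl
      filter_upwards [h1.continuousAt.preimage_mem_nhds hO,
        (hE.preimage h2).mem_nhds (by simp)]
      rintro ⟨⟨t, r⟩, hw⟩ hwO hwE
      induction r using OnePoint.rec with
      | infty => exact hzU
      | coe j =>
        by_contra hj
        refine hwE ⟨j, ⟨hj, ?_⟩, rfl⟩
        exact (show t = x j from hw j rfl) ▸ hwO
    | coe i =>
      filter_upwards [((hopen i).preimage h2).mem_nhds rfl]
      rintro ⟨⟨t, r⟩, hw⟩ rfl
      exact hzU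
  · rintro (_ | i)
    · exact ⟨⟨(0, ∞), fun i hi => (coe_ne_infty i hi.symm).elim⟩, rfl⟩
    · exact ⟨⟨(x i, i), fun j hj => by simp [coe_injective hj]⟩, rfl⟩

end AddLimit

theorem stmt12 :
    Cardinal.aleph 1 < boundingNumber ↔
      ∀ (X : Type u) (_ : TopologicalSpace X), T2Space X → IsKAnalytic X →
        (∀ K : Set X, IsCompact K → TopologicalSpace.MetrizableSpace ↥K) →
        IsAnalyticSpace X := by
  refine ⟨fun h X _ _ hX hmet => isAnalyticSpace_of_aleph_one_lt_boundingNumber h X hX hmet,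
    fun h => ?_⟩
  by_contra! hle
  obtain ⟨Ω, x, _, hx⟩ := exists_uncountable_family_of_boundingNumber_le hle
  have hx' : ∀ y : ℕ → ℕ, {i : ULift.{u} Ω | ∀ n, x i.down n ≤ y n}.Countable := fun y =>
    (hx y).preimage ULift.down_injective
  exact AddLimit.not_isAnalyticSpace (h (AddLimit fun i : ULift.{u} Ω => x i.down) inferInstance
    inferInstance (AddLimit.isKAnalytic _) fun K hK => AddLimit.metrizableSpace_of_isCompact hx' hK)
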